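/- arXiv:0907.1038 — 2 statements merged into one kernel-verified Lean document; each statement's English description precedes it below -/
import Mathlib

section
/- Let n ≥ 1 and let ∼ be an equivalence relation on {1, 2, …, n} which is non-crossing (there are no indices a < b < c < d with a ∼ c, b ∼ d, and a ≁ b) and in which no equivalence class contains four consecutive integers i, i+1, i+2, i+3. Then the number of equivalence classes of ∼ is at least n/6 + 1/2. -/
/-!
Call a pair of consecutive points a break if its members are inequivalent. If neither the right
point of a break were the first of its class nor the left point the last of its class, then the two
classes would cross. Hence every break opens or closes a class; as the class of the first point is
opened, and the class of the last point closed, at no break, `q` classes allow at most `2 * (q - 1)`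
breaks. On the other hand, when no class contains `k + 1` consecutive points, every `k` consecutive
pairs include a break, so `n` points have at least `⌊(n - 1) / k⌋` breaks.
-/

/-- A non-crossing equivalence relation: two different classes never interleave as `a < b < c < d`
with `a, c` in one class and `b, d` in the other. -/
def IsNoncrossing {α : Type*} [Preorder α] (s : Setoid α) : Prop :=
  ∀ a b c d : α, a < b → b < c → c < d → s a c → s b d → s a b

section PartialOrder

variable {α : Type*} [PartialOrder α]

theorem ncard_isLeast_class_le (s : Setoid α) [Finite (Quotient s)] :
    {a | IsLeast {x | s x a} a}.ncard ≤ Nat.card (Quotient s) := by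
  rw [← Set.ncard_univ]
  refine Set.ncard_le_ncard_of_injOn (Quotient.mk s) (fun _ _ ↦ Set.mem_univ _) ?_
  intro a ha b hb hab
  have hrel : s a b := Quotient.exact hab
  exact le_antisymm (ha.2 (s.symm hrel)) (hb.2 hrel)

theorem ncard_isGreatest_class_le (s : Setoid α) [Finite (Quotient s)] :
    {a | IsGreatest {x | s x a} a}.ncard ≤ Nat.card (Quotient s) :=
  @ncard_isLeast_class_le αᵒᵈ _ s ‹_›

end PartialOrder

theorem IsNoncrossing.isLeast_class_or_isGreatest_class {α : Type*} [LinearOrder α]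
    {s : Setoid α} (hs : IsNoncrossing s) {a b : α} (hcov : a ⋖ b) (hab : ¬ s a b) :
    IsLeast {x | s x b} b ∨ IsGreatest {x | s x a} a := by
  by_contra! h
  obtain ⟨x, hxb, hx_lt⟩ : ∃ x, s x b ∧ x < b := by
    by_contra! hmin
    exact h.1 ⟨s.refl b, hmin⟩
  obtain ⟨y, hya, lt_hy⟩ : ∃ y, s y a ∧ a < y := by
    by_contra! hmax
    exact h.2 ⟨s.refl a, hmax⟩
  have hxa : x < a := (hcov.le_of_lt hx_lt).lt_of_ne fun hxa ↦ hab (hxa ▸ hxb)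
  have hby : b < y := (hcov.ge_of_gt lt_hy).lt_of_ne fun hby ↦ hab (s.symm (hby ▸ hya))
  have hx_rel_a : s x a := hs x a b y hxa hcov.lt hby hxb (s.symm hya)
  exact hab (s.trans (s.symm hx_rel_a) hxb)

section Breaks

variable {m : ℕ}

/-- The breaks of an equivalence relation on `m + 1` points in a row, a break being a pair of
consecutive inequivalent points; the pair `i, i + 1` is indexed by `i : Fin m`. -/
def breaks (s : Setoid (Fin (m + 1))) : Set (Fin m) :=
  {i | ¬ s i.castSucc i.succ}

theorem ncard_isLeast_class_succ_lt (s : Setoid (Fin (m + 1))) :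
    {i : Fin m | IsLeast {x | s x i.succ} i.succ}.ncard < Nat.card (Quotient s) := by
  set openings := {i : Fin m | IsLeast {x | s x i.succ} i.succ}
  have zero_notMem : (0 : Fin (m + 1)) ∉ Fin.succ '' openings := by
    rintro ⟨i, -, hi⟩
    exact Fin.succ_ne_zero i hi
  have insert_subset : insert 0 (Fin.succ '' openings) ⊆ {a | IsLeast {x | s x a} a} :=
    Set.insert_subset ⟨s.refl 0, fun x _ ↦ Fin.zero_le x⟩ (Set.image_subset_iff.2 fun _ hi ↦ hi)
  calc openings.ncard + 1
      = (insert 0 (Fin.succ '' openings)).ncard := by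
        rw [Set.ncard_insert_of_notMem zero_notMem,
          Set.ncard_image_of_injective _ (Fin.succ_injective m)]
    _ ≤ {a | IsLeast {x | s x a} a}.ncard := Set.ncard_le_ncard insert_subset
    _ ≤ Nat.card (Quotient s) := ncard_isLeast_class_le s

theorem ncard_isGreatest_class_castSucc_lt (s : Setoid (Fin (m + 1))) :
    {i : Fin m | IsGreatest {x | s x i.castSucc} i.castSucc}.ncard < Nat.card (Quotient s) := by
  set closings := {i : Fin m | IsGreatest {x | s x i.castSucc} i.castSucc}
  have last_notMem : Fin.last m ∉ Fin.castSucc '' closings := by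
    rintro ⟨i, -, hi⟩
    exact Fin.castSucc_ne_last i hi
  have insert_subset :
      insert (Fin.last m) (Fin.castSucc '' closings) ⊆ {a | IsGreatest {x | s x a} a} :=
    Set.insert_subset ⟨s.refl _, fun x _ ↦ Fin.le_last x⟩ (Set.image_subset_iff.2 fun _ hi ↦ hi)
  calc closings.ncard + 1
      = (insert (Fin.last m) (Fin.castSucc '' closings)).ncard := by
        rw [Set.ncard_insert_of_notMem last_notMem,
          Set.ncard_image_of_injective _ (Fin.castSucc_injective m)]
    _ ≤ {a | IsGreatest {x | s x a} a}.ncard := Set.ncard_le_ncard insert_subset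
    _ ≤ Nat.card (Quotient s) := ncard_isGreatest_class_le s

theorem IsNoncrossing.ncard_breaks_add_two_le {s : Setoid (Fin (m + 1))} (hs : IsNoncrossing s) :
    (breaks s).ncard + 2 ≤ 2 * Nat.card (Quotient s) := by
  have breaks_subset : breaks s ⊆ {i : Fin m | IsLeast {x | s x i.succ} i.succ} ∪
      {i : Fin m | IsGreatest {x | s x i.castSucc} i.castSucc} :=
    fun i hi ↦ hs.isLeast_class_or_isGreatest_class (Fin.covBy_iff.2 (by simp)) hi
  have ncard_le := (Set.ncard_le_ncard breaks_subset).trans (Set.ncard_union_le _ _)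
  have openings_lt := ncard_isLeast_class_succ_lt s
  have closings_lt := ncard_isGreatest_class_castSucc_lt s
  lia

theorem exists_mem_breaks_of_not_rel {s : Setoid (Fin (m + 1))} {a b : Fin (m + 1)} (hle : a ≤ b)
    (hab : ¬ s a b) : ∃ i ∈ breaks s, a ≤ i.castSucc ∧ i.castSucc < b := by
  induction b using Fin.induction with
  | zero =>
    obtain rfl : a = 0 := Fin.le_zero_iff.1 hle
    exact absurd (s.refl 0) hab
  | succ i ih =>
    have hne : a ≠ i.succ := by
      rintro rfl
      exact hab (s.refl _)
    have hle_i : a ≤ i.castSucc := Fin.le_castSucc_iff.2 (hle.lt_of_ne hne)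
    by_cases hi : s i.castSucc i.succ
    · obtain ⟨j, hj, haj, hji⟩ := ih hle_i fun h ↦ hab (s.trans h hi)
      exact ⟨j, hj, haj, hji.trans Fin.castSucc_lt_succ⟩
    · exact ⟨i, hi, hle_i, Fin.castSucc_lt_succ⟩

theorem div_le_ncard_of_forall_exists_mem_window {k : ℕ} {t : Set (Fin m)}
    (ht : ∀ a, a + k ≤ m → ∃ i ∈ t, a ≤ (i : ℕ) ∧ (i : ℕ) < a + k) : m / k ≤ t.ncard := by
  have block_subset : Set.Iio (m / k) ⊆ (fun i : Fin m ↦ (i : ℕ) / k) '' t := by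
    intro j hj
    have block_le : (j + 1) * k ≤ m := (Nat.mul_le_mul_right k hj).trans (Nat.div_mul_le_self m k)
    rw [Nat.add_one_mul] at block_le
    obtain ⟨i, hi, hle, hlt⟩ := ht (j * k) block_le
    exact ⟨i, hi, Nat.div_eq_of_lt_le hle (by rwa [Nat.add_one_mul])⟩
  calc m / k = (Set.Iio (m / k)).ncard := by simp
    _ ≤ ((fun i : Fin m ↦ (i : ℕ) / k) '' t).ncard := Set.ncard_le_ncard block_subset
    _ ≤ t.ncard := Set.ncard_image_le

theorem div_le_ncard_breaks {k : ℕ} {s : Setoid (Fin (m + 1))}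
    (norun : ∀ a b : Fin (m + 1), (b : ℕ) = a + k → ∃ x ∈ Set.Icc a b, ¬ s a x) :
    m / k ≤ (breaks s).ncard := by
  refine div_le_ncard_of_forall_exists_mem_window fun a ha ↦ ?_
  obtain ⟨x, ⟨hax, hxb⟩, hx⟩ := norun ⟨a, by lia⟩ ⟨a + k, by lia⟩ rfl
  obtain ⟨i, hi, hai, hix⟩ := exists_mem_breaks_of_not_rel hax hx
  exact ⟨i, hi, hai, hix.trans_le hxb⟩

end Breaks

theorem stmt_0_general (n k : ℕ) (hn : 1 ≤ n) (s : Setoid (Fin n)) (noncross : IsNoncrossing s)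
    (norun : ∀ a b : Fin n, (b : ℕ) = a + k → ∃ x ∈ Set.Icc a b, ¬ s a x) :
    (n : ℚ) / (2 * k) + 1 / 2 ≤ Nat.card (Quotient s) := by
  obtain ⟨m, rfl⟩ := Nat.exists_eq_add_of_le' hn
  have hk : 0 < k := by
    by_contra! hk
    obtain ⟨x, ⟨h0x, hx0⟩, hx⟩ := norun 0 0 (by lia)
    exact hx (le_antisymm h0x hx0 ▸ s.refl 0)
  have card_bound : m / k + 2 ≤ 2 * Nat.card (Quotient s) :=
    (Nat.add_le_add_right (div_le_ncard_breaks norun) 2).trans noncross.ncard_breaks_add_two_le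
  have size_bound : m + 1 + k ≤ k * (2 * Nat.card (Quotient s)) :=
    calc m + 1 + k ≤ k * (m / k + 1) + k := by gcongr; exact Nat.lt_mul_div_succ m hk
      _ = k * (m / k + 2) := by ring
      _ ≤ k * (2 * Nat.card (Quotient s)) := by gcongr
  have size_bound_rat : ((m + 1 : ℕ) : ℚ) + k ≤ k * (2 * Nat.card (Quotient s)) := by
    exact_mod_cast size_bound
  have hk_rat : (0 : ℚ) < k := by exact_mod_cast hk
  field_simp
  linarith

theorem exists_mem_Icc_not_rel_of_forall_not_four_rel {n : ℕ} {s : Setoid (Fin n)}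
    (nofour : ∀ a b c d : Fin n, (b : ℕ) = a + 1 → (c : ℕ) = a + 2 →
      (d : ℕ) = a + 3 → ¬ (s a b ∧ s a c ∧ s a d))
    (a d : Fin n) (had : (d : ℕ) = a + 3) : ∃ x ∈ Set.Icc a d, ¬ s a x := by
  by_contra! hrun
  have rel_of_le (x : Fin n) (hax : (a : ℕ) ≤ x) (hxd : (x : ℕ) ≤ d) : s a x := hrun x ⟨hax, hxd⟩
  exact nofour a ⟨a + 1, by lia⟩ ⟨a + 2, by lia⟩ d rfl rfl had
    ⟨rel_of_le _ (by simp) (by simp [had]), rel_of_le _ (by simp) (by simp [had]),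
      rel_of_le _ (by lia) le_rfl⟩

/-- Bead-counting sublemma from the Curve length lemma: a non-crossing
equivalence relation on `{1,…,n}` with no equivalence class containing four
consecutive integers has at least `n/6 + 1/2` equivalence classes. -/
theorem stmt_0 (n : ℕ) (hn : 1 ≤ n) (s : Setoid (Fin n))
    (noncross : ∀ a b c d : Fin n, a < b → b < c → c < d →
      s.r a c → s.r b d → s.r a b)
    (nofour : ∀ a b c d : Fin n, (b : ℕ) = a + 1 → (c : ℕ) = a + 2 →
      (d : ℕ) = a + 3 → ¬ (s.r a b ∧ s.r a c ∧ s.r a d)) :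
    ((Nat.card (Quotient s) : ℚ)) ≥ n / 6 + 1 / 2 := by
  have general_bound :=
    stmt_0_general n 3 hn s noncross (exists_mem_Icc_not_rel_of_forall_not_four_rel nofour)
  norm_num at general_bound ⊢
  exact general_bound
end

section
/- Let f : ℕ → ℚ satisfy f(0) ≥ 0 and f(1) ≥ 1, f(2) ≥ 1, f(3) ≥ 1, and suppose that for every k ≥ 4 there exist an integer t ≥ 1 and nonnegative integers l₁, …, l_t with l₁ + ⋯ + l_t = k − t, such that the number of indices i with l_i > 0 is at least ⌊(t−1)/3⌋ and f(k) ≥ 1 + f(l₁) + ⋯ + f(l_t). Then for every k ≥ 1, f(k) ≥ k/6 + 1/2. -/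
/-!
The `t` removed beads cost `t / 6` in the linear term of the bound, and each of the `c` non-empty
pieces contributes its own constant term `1 / 2`. Since `⌊(t - 1) / 3⌋ ≤ c` means `t ≤ 3 (c + 1)`,
the cost `t / 6 ≤ (c + 1) / 2` is covered by these `c / 2` together with half of the class that was
removed; the other half is the constant term for `k`. Nothing is special about `3`: if at least
every `m`-th piece is non-empty, the same balance gives the slope `1 / (2 m)`.
-/

open Finset

theorem mul_sum_add_mul_card_pos_le_sum {ι R : Type*} [Semiring R] [PartialOrder R]
    [IsOrderedAddMonoid R] {f : ℕ → R} {a b : R} {s : Finset ι} {l : ι → ℕ} (h0 : 0 ≤ f 0)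
    (hpos : ∀ i ∈ s, 0 < l i → a * l i + b ≤ f (l i)) :
    a * ((∑ i ∈ s, l i : ℕ) : R) + b * #{i ∈ s | 0 < l i} ≤ ∑ i ∈ s, f (l i) :=
  calc a * ((∑ i ∈ s, l i : ℕ) : R) + b * #{i ∈ s | 0 < l i}
      = ∑ i ∈ s, (a * l i + if 0 < l i then b else 0) := by
        rw [sum_add_distrib, ← mul_sum, ← Nat.cast_sum, ← sum_filter, sum_const,
          nsmul_eq_mul, Nat.cast_comm]
    _ ≤ ∑ i ∈ s, f (l i) := by
        refine sum_le_sum fun i hi => ?_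
        rcases (l i).eq_zero_or_pos with hzero | hli
        · simpa [hzero] using h0
        · simpa [hli] using hpos i hi hli

theorem le_mul_add_one_of_sub_one_div_le {t m c : ℕ} (hm : 0 < m) (h : (t - 1) / m ≤ c) :
    t ≤ m * (c + 1) := by
  have hlt : t - 1 < (c + 1) * m := (Nat.div_lt_iff_lt_mul hm).mp (Nat.lt_succ_of_le h)
  rw [mul_comm]
  omega

section LinearOrderedField

variable {K : Type*} [Field K] [LinearOrder K] [IsStrictOrderedRing K]

theorem div_two_mul_le_half_mul {t m c : ℕ} (hm : 0 < m) (h : t ≤ m * c) :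
    (t : K) / (2 * m) ≤ 1 / 2 * c := by
  have hcast : (t : K) ≤ m * c := by exact_mod_cast h
  rw [div_le_iff₀ (by positivity)]
  linarith

theorem stmt_1_general {f : ℕ → K} {m : ℕ} (hm : 0 < m) (h0 : 0 ≤ f 0)
    (hbase : ∀ k, 0 < k → k ≤ m → 1 ≤ f k)
    (hrec : ∀ k, m < k → ∃ (t : ℕ) (l : Fin t → ℕ), (∑ i, l i) + t = k ∧
      (t - 1) / m ≤ #{i | 0 < l i} ∧ 1 + ∑ i, f (l i) ≤ f k)
    {k : ℕ} (hk : 0 < k) : (k : K) / (2 * m) + 1 / 2 ≤ f k := by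
  induction k using Nat.strong_induction_on with
  | _ k ih =>
    rcases le_or_gt k m with hkm | hmk
    · have hslope : (k : K) / (2 * m) ≤ 1 / 2 * (1 : ℕ) :=
        div_two_mul_le_half_mul hm (by simpa using hkm)
      rw [Nat.cast_one] at hslope
      linarith [hbase k hk hkm]
    · obtain ⟨t, l, rfl, hcard, hf⟩ := hrec k hmk
      have hlt (i : Fin t) : l i < ∑ j, l j + t :=
        (single_le_sum_of_canonicallyOrdered (mem_univ i)).trans_lt
          (Nat.lt_add_of_pos_right i.pos)
      have hpieces : (2 * m : K)⁻¹ * ((∑ i, l i : ℕ) : K) + 1 / 2 * #{i | 0 < l i}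
          ≤ ∑ i, f (l i) :=
        mul_sum_add_mul_card_pos_le_sum h0 fun i _ hi => by
          simpa only [div_eq_inv_mul] using ih (l i) (hlt i) hi
      have hremoved : (t : K) / (2 * m) ≤ 1 / 2 * (#{i | 0 < l i} + 1 : ℕ) :=
        div_two_mul_le_half_mul hm (le_mul_add_one_of_sub_one_div_le hm hcard)
      rw [← div_eq_inv_mul] at hpieces
      rw [Nat.cast_add, Nat.cast_one] at hremoved
      rw [Nat.cast_add, add_div]
      linarith

end LinearOrderedField

/-- The recursion satisfied by `nr(k)` in the proof of the Curve length lemma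
implies the lower bound `nr(k) ≥ k/6 + 1/2` for all `k ≥ 1`. -/
theorem stmt_1 (f : ℕ → ℚ) (h0 : f 0 ≥ 0) (h1 : f 1 ≥ 1) (h2 : f 2 ≥ 1)
    (h3 : f 3 ≥ 1)
    (hrec : ∀ k : ℕ, 4 ≤ k → ∃ (t : ℕ) (l : Fin t → ℕ), 1 ≤ t ∧
      (∑ i, l i) + t = k ∧
      (t - 1) / 3 ≤ (Finset.univ.filter (fun i => 0 < l i)).card ∧
      f k ≥ 1 + ∑ i, f (l i)) :
    ∀ k : ℕ, 1 ≤ k → f k ≥ (k : ℚ) / 6 + 1 / 2 := by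
  intro k hk
  have hbase : ∀ j, 0 < j → j ≤ 3 → 1 ≤ f j := fun j _ _ => by interval_cases j <;> assumption
  have hbound := stmt_1_general three_pos h0 hbase
    (fun j hj => let ⟨t, l, _, h⟩ := hrec j hj; ⟨t, l, h⟩) hk
  have hsix : 2 * ((3 : ℕ) : ℚ) = 6 := by norm_num
  rwa [hsix] at hbound
end
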